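/- arXiv:2405.12771 — 3 statements merged into one kernel-verified Lean document; each statement's English description precedes it below -/
import Mathlib

section
/- Let L be a first-order language and let M and N be L-structures. Then Th_{∀∃}(M) ⊆ Th_{∀∃}(N) if and only if there exists an L-structure M* elementarily equivalent to M together with an existentially closed L-embedding of N into M*. -/
open FirstOrder Language

universe u v w x

/-- Apply existential quantifiers to the last `s` bound variables of a bounded formula. -/
def FirstOrder.Language.BoundedFormula.exsN {L : FirstOrder.Language} {α : Type*} {m : ℕ} :
    ∀ {s : ℕ}, L.BoundedFormula α (m + s) → L.BoundedFormula α m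
  | 0, φ => φ
  | _ + 1, φ => φ.ex.exsN

/-- `Th_{∀∃}(M) ⊆ Th_{∀∃}(N)`: every sentence of the form `∀ x₁ … xₘ ∃ y₁ … yₛ ψ` with `ψ`
quantifier-free that holds in `M` also holds in `N`. -/
def AETheorySub (L : FirstOrder.Language) (M : Type*) (N : Type*)
    [L.Structure M] [L.Structure N] : Prop :=
  ∀ (m s : ℕ) (ψ : L.BoundedFormula Empty (m + s)), ψ.IsQF →
    M ⊨ (ψ.exsN.alls : L.Sentence) → N ⊨ (ψ.exsN.alls : L.Sentence)

/-- An embedding `f : M ↪ N` is existentially closed: every existential formula with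
parameters from `M` that holds in `N` (at the images of the parameters) holds in `M`. -/
def IsECEmbedding {L : FirstOrder.Language} {M N : Type*} [L.Structure M] [L.Structure N]
    (f : M ↪[L] N) : Prop :=
  ∀ (k s : ℕ) (ψ : L.BoundedFormula (Fin k) s), ψ.IsQF → ∀ a : Fin k → M,
    (ψ.exs : L.Formula (Fin k)).Realize (fun i => f (a i)) →
      (ψ.exs : L.Formula (Fin k)).Realize a

/-!
If `Th_{∀∃}(M) ⊆ Th_{∀∃}(N)`, then every universal formula satisfiable in `N` is satisfiable in
`M`: otherwise `M` satisfies `∀ x, ∃ y, ¬ φ(x, y)`, hence so does `N`. As universal formulas are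
closed under finite conjunctions, the universal diagram of `N` is finitely satisfiable in `M`, so it
is satisfied in an ultrapower of `M`, and the interpretation of `N` there is the required embedding.
Conversely, an existentially closed embedding of `N` into `M*` pulls the witnesses of a `∀∃`
sentence back from `M*` to `N`.
-/

section QuantifierFree

variable {L : FirstOrder.Language} {α β : Type*} {n : ℕ}

theorem isQF_toFormula {φ : L.BoundedFormula α n} (hφ : φ.IsQF) : φ.toFormula.IsQF := by
  induction hφ with
  | falsum => exact .falsum
  | of_isAtomic h =>
    cases h with
    | equal t₁ t₂ => exact (BoundedFormula.IsAtomic.equal _ _).isQF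
    | rel R ts => exact (BoundedFormula.IsAtomic.rel _ _).isQF
  | imp _ _ ih₁ ih₂ => exact ih₁.imp ih₂

theorem isQF_restrictFreeVar [DecidableEq α] {φ : L.BoundedFormula α n} (hφ : φ.IsQF)
    (g : φ.freeVarFinset → β) : (φ.restrictFreeVar g).IsQF := by
  induction hφ with
  | falsum => exact .falsum
  | of_isAtomic h =>
    cases h with
    | equal t₁ t₂ => exact (BoundedFormula.IsAtomic.equal _ _).isQF
    | rel R ts => exact (BoundedFormula.IsAtomic.rel _ _).isQF
  | imp _ _ ih₁ ih₂ => exact (ih₁ _).imp (ih₂ _)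

theorem isQF_foldr_inf {l : List (L.BoundedFormula α n)} (hl : ∀ φ ∈ l, φ.IsQF) :
    (l.foldr (· ⊓ ·) ⊤).IsQF := by
  induction l with
  | nil => exact .top
  | cons φ l ih => exact (hl φ List.mem_cons_self).inf (ih fun ψ hψ => hl ψ (.tail _ hψ))

theorem isQF_iInf {ι : Type*} [Finite ι] {φ : ι → L.Formula α} (hφ : ∀ i, (φ i).IsQF) :
    (Formula.iInf φ).IsQF :=
  isQF_foldr_inf <| by
    simpa only [List.mem_map, Finset.mem_toList, Finset.mem_univ, true_and, forall_exists_index,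
      forall_apply_eq_imp_iff] using hφ

end QuantifierFree

section Realize

variable {L : FirstOrder.Language} {A : Type*} [L.Structure A] {α β : Type*} {m n s : ℕ}

theorem realize_exsN (v : α → A) (x : Fin m → A) :
    ∀ {s : ℕ} (φ : L.BoundedFormula α (m + s)),
      φ.exsN.Realize v x ↔ ∃ y : Fin s → A, φ.Realize v (Fin.append x y)
  | 0, φ => by
    simp only [Fin.exists_fin_zero_pi, Fin.append_right_nil _ _ rfl]
    rfl
  | s + 1, φ => by
    rw [BoundedFormula.exsN, realize_exsN v x φ.ex]
    simp only [BoundedFormula.realize_ex, ← Fin.append_snoc]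
    exact ⟨fun ⟨y, b, h⟩ => ⟨Fin.snoc y b, h⟩, fun ⟨y, h⟩ =>
      ⟨Fin.init y, y (Fin.last s), by rwa [Fin.snoc_init_self]⟩⟩

theorem realize_exsN_alls_iff (ψ : L.BoundedFormula Empty (m + s)) :
    A ⊨ (ψ.exsN.alls : L.Sentence) ↔
      ∀ x : Fin m → A, ∃ y : Fin s → A, ψ.Realize default (Fin.append x y) := by
  simp only [Sentence.Realize, BoundedFormula.realize_alls, realize_exsN]

theorem realize_relabel_formula (φ : L.Formula α) (g : α → β ⊕ Fin n) (v : β → A)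
    (x : Fin n → A) :
    (BoundedFormula.relabel g φ).Realize v x ↔ φ.Realize (Sum.elim v x ∘ g) := by
  rw [BoundedFormula.realize_relabel, Formula.Realize, Fin.castAdd_zero, Fin.cast_refl,
    Function.comp_id, Subsingleton.elim (x ∘ (Fin.natAdd n : Fin 0 → Fin n)) default]

theorem realize_exs_relabel_id (φ : L.Formula (α ⊕ Fin n)) (v : α → A) :
    (BoundedFormula.exs (n := n) (BoundedFormula.relabel id φ)).Realize v ↔
      ∃ x : Fin n → A, φ.Realize (Sum.elim v x) :=
  BoundedFormula.realize_exs.trans (exists_congr fun x => realize_relabel_formula φ id v x)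

theorem realize_relabel_finSumFinEquiv (φ : L.Formula (Fin m ⊕ Fin s)) (x : Fin m → A)
    (y : Fin s → A) :
    BoundedFormula.Realize (l := m + s) (BoundedFormula.relabel (Sum.inr ∘ finSumFinEquiv) φ)
      (default : Empty → A) (Fin.append x y) ↔ φ.Realize (Sum.elim x y) := by
  refine (realize_relabel_formula _ _ _ _).trans (iff_of_eq (congrArg _ (funext ?_)))
  rintro (i | i) <;> simp

theorem realize_toFormula_relabel_finSumFinEquiv_symm (ψ : L.BoundedFormula Empty (m + s))
    (x : Fin m → A) (y : Fin s → A) :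
    (ψ.toFormula.relabel (Sum.elim Empty.elim finSumFinEquiv.symm)).Realize (Sum.elim x y) ↔
      ψ.Realize default (Fin.append x y) := by
  rw [Formula.realize_relabel, BoundedFormula.realize_toFormula]
  refine iff_of_eq (congrArg₂ _ (Subsingleton.elim _ _) (funext fun i => ?_))
  induction i using Fin.addCases <;> simp

theorem realize_toFormula_relabel_map (ψ : L.BoundedFormula α n) (g : α → β) (v : β → A)
    (x : Fin n → A) :
    (ψ.toFormula.relabel (Sum.map g id)).Realize (Sum.elim v x) ↔ ψ.Realize (v ∘ g) x := by
  rw [Formula.realize_relabel, Sum.elim_comp_map, BoundedFormula.realize_toFormula,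
    Sum.elim_comp_inl, Sum.elim_comp_inr, Function.comp_id]

theorem realize_iInf_relabel_sigmaMk {ι : Type*} [Finite ι] {β : ι → Type*}
    (φ : ∀ i, L.Formula (α ⊕ β i)) (x : α → A) (y : (Σ i, β i) → A) :
    (Formula.iInf fun i => (φ i).relabel (Sum.map id (Sigma.mk i))).Realize (Sum.elim x y) ↔
      ∀ i, (φ i).Realize (Sum.elim x (y ∘ Sigma.mk i)) := by
  simp only [Formula.realize_iInf, Formula.realize_relabel, Sum.elim_comp_map, Function.comp_id]

/-- The formula `φ` with the left summand of its variables cut down to the finitely many variables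
which occur in `φ`. -/
def restrictLeft [DecidableEq α] [DecidableEq β] (φ : L.Formula (α ⊕ β)) :
    L.Formula ((BoundedFormula.freeVarFinset φ).toLeft ⊕ β) :=
  φ.restrictFreeVar fun
    | ⟨.inl a, ha⟩ => .inl ⟨a, Finset.mem_toLeft.2 ha⟩
    | ⟨.inr b, _⟩ => .inr b

theorem realize_restrictLeft [DecidableEq α] [DecidableEq β] (φ : L.Formula (α ⊕ β)) (x : α → A)
    (y : β → A) :
    (restrictLeft φ).Realize (Sum.elim (x ∘ (↑)) y) ↔ φ.Realize (Sum.elim x y) :=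
  BoundedFormula.realize_restrictFreeVar _ <| by rintro ⟨_ | _, _⟩ <;> rfl

end Realize

theorem exists_elementarilyEquivalent_realize {L : FirstOrder.Language.{u, v}} {M : Type w}
    [L.Structure M] [Nonempty M] {α : Type x} (Γ : Set (L.Formula α))
    (hΓ : ∀ S : Finset Γ, ∃ a : α → M, ∀ φ ∈ S, φ.1.Realize a) :
    ∃ (M' : Type (max u v w x)) (_ : L.Structure M'),
      (M ≅[L] M') ∧ ∃ a : α → M', ∀ φ ∈ Γ, φ.Realize a := by
  choose a ha using hΓ
  let 𝓤 : Ultrafilter (Finset Γ) := Ultrafilter.of Filter.atTop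
  refine ⟨(𝓤 : Filter (Finset Γ)).Product fun _ => M, Ultraproduct.structure,
    elementarilyEquivalent_iff.2 fun φ => ?_, fun i => (fun S => a S i : Filter.Product _ _),
    fun φ hφ => ?_⟩
  · rw [Ultraproduct.sentence_realize, Filter.eventually_const]
  · have h𝓤 : ∀ᶠ S in (𝓤 : Filter (Finset Γ)), {⟨φ, hφ⟩} ≤ S :=
      Ultrafilter.of_le _ (Filter.eventually_ge_atTop _)
    refine (Ultraproduct.realize_formula_cast φ fun i S => a S i).2 ?_
    filter_upwards [h𝓤] with S hS
    exact ha S ⟨φ, hφ⟩ (Finset.singleton_subset_iff.1 hS)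

/-- `f : A → B` preserves universal formulas with parameters from `A`: it interprets the universal
diagram of `A` in `B`. A parameter `a : A` is the free variable `Sum.inl a`, and the variables
`Sum.inr i` are the universally quantified ones. -/
def PreservesUniversal (L : FirstOrder.Language) {A B : Type*} [L.Structure A] [L.Structure B]
    (f : A → B) : Prop :=
  ∀ (s : ℕ) (φ : L.Formula (A ⊕ Fin s)), φ.IsQF →
    (∀ y : Fin s → A, φ.Realize (Sum.elim id y)) → ∀ y : Fin s → B, φ.Realize (Sum.elim f y)

namespace PreservesUniversal

variable {L : FirstOrder.Language} {A B : Type*} [L.Structure A] [L.Structure B] {f : A → B}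

theorem exists_realize (hf : PreservesUniversal L f) {s : ℕ} {φ : L.Formula (A ⊕ Fin s)}
    (hφ : φ.IsQF) (h : ∃ y : Fin s → B, φ.Realize (Sum.elim f y)) :
    ∃ y : Fin s → A, φ.Realize (Sum.elim id y) := by
  contrapose! h
  simpa only [Formula.realize_not] using hf s φ.not hφ.not h

theorem realize_iff (hf : PreservesUniversal L f) {φ : L.Formula A} (hφ : φ.IsQF) :
    φ.Realize f ↔ φ.Realize id := by
  have transfer {ψ : L.Formula A} (hψ : ψ.IsQF) (h : ψ.Realize id) : ψ.Realize f := by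
    simpa only [Formula.realize_relabel, Sum.elim_comp_inl, Unique.forall_iff, forall_const]
      using hf 0 (ψ.relabel Sum.inl) (hψ.relabel _)
        (by simpa only [Formula.realize_relabel, Sum.elim_comp_inl, forall_const] using h)
  refine ⟨fun h => ?_, transfer hφ⟩
  by_contra h'
  exact transfer hφ.not h' h

/-- A map preserving universal formulas, as an embedding. -/
def toEmbedding (hf : PreservesUniversal L f) : A ↪[L] B where
  toFun := f
  inj' a b hab := by
    have := hf.realize_iff (φ := (Term.var a).equal (Term.var b))
      (BoundedFormula.IsAtomic.equal _ _).isQF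
    exact (Formula.realize_equal.symm.trans (this.trans Formula.realize_equal)).1 hab
  map_fun' F x := by
    have := hf.realize_iff
      (φ := (Term.var (Structure.funMap F x)).equal (Term.func F fun i => Term.var (x i)))
      (BoundedFormula.IsAtomic.equal _ _).isQF
    exact (Formula.realize_equal.symm.trans (this.trans Formula.realize_equal)).2 rfl
  map_rel' R x := by
    have := hf.realize_iff (φ := R.formula fun i => Term.var (x i))
      (BoundedFormula.IsAtomic.rel _ _).isQF
    exact Formula.realize_rel.symm.trans (this.trans Formula.realize_rel)

theorem isECEmbedding_toEmbedding (hf : PreservesUniversal L f) :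
    IsECEmbedding hf.toEmbedding := by
  intro k s ψ hψ a h
  rw [BoundedFormula.realize_exs] at h ⊢
  obtain ⟨y, hy⟩ := hf.exists_realize ((isQF_toFormula hψ).relabel _)
    (h.imp fun y => (realize_toFormula_relabel_map ψ a f y).2)
  exact ⟨y, (realize_toFormula_relabel_map ψ a id y).1 hy⟩

end PreservesUniversal

theorem IsECEmbedding.exists_realize {L : FirstOrder.Language} {A B : Type*} [L.Structure A]
    [L.Structure B] {f : A ↪[L] B} (hf : IsECEmbedding f) {k s : ℕ}
    {φ : L.Formula (Fin k ⊕ Fin s)} (hφ : φ.IsQF) (a : Fin k → A)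
    (h : ∃ y : Fin s → B, φ.Realize (Sum.elim (f ∘ a) y)) :
    ∃ y : Fin s → A, φ.Realize (Sum.elim a y) := by
  rw [← realize_exs_relabel_id] at h ⊢
  exact hf k s _ (hφ.relabel id) a h

theorem IsECEmbedding.aeTheorySub {L : FirstOrder.Language} {A B : Type*} [L.Structure A]
    [L.Structure B] {f : A ↪[L] B} (hf : IsECEmbedding f) : AETheorySub L B A := by
  intro m s ψ hψ h
  simp only [realize_exsN_alls_iff, ← realize_toFormula_relabel_finSumFinEquiv_symm] at h ⊢
  exact fun x => hf.exists_realize ((isQF_toFormula hψ).relabel _) x (h (f ∘ x))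

namespace AETheorySub

variable {L : FirstOrder.Language} {M N : Type*} [L.Structure M] [L.Structure N]
  {α β : Type*}

theorem of_elementarilyEquivalent {M' : Type*} [L.Structure M'] (H : AETheorySub L M N)
    (h : M ≅[L] M') : AETheorySub L M' N :=
  fun m s ψ hψ hM' => H m s ψ hψ ((h.realize_sentence _).2 hM')

theorem forall_exists_realize_fin (H : AETheorySub L M N) {m s : ℕ}
    {φ : L.Formula (Fin m ⊕ Fin s)} (hφ : φ.IsQF)
    (h : ∀ x : Fin m → M, ∃ y : Fin s → M, φ.Realize (Sum.elim x y)) (x : Fin m → N) :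
    ∃ y : Fin s → N, φ.Realize (Sum.elim x y) := by
  have hM := (realize_exsN_alls_iff _).2 fun x =>
    (h x).imp fun y => (realize_relabel_finSumFinEquiv φ x y).2
  have hN := (realize_exsN_alls_iff _).1 (H m s _ (hφ.relabel _) hM)
  exact (hN x).imp fun y => (realize_relabel_finSumFinEquiv φ x y).1

theorem forall_exists_realize (H : AETheorySub L M N) [Finite α] [Finite β]
    {φ : L.Formula (α ⊕ β)} (hφ : φ.IsQF)
    (h : ∀ x : α → M, ∃ y : β → M, φ.Realize (Sum.elim x y)) (x : α → N) :
    ∃ y : β → N, φ.Realize (Sum.elim x y) := by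
  obtain ⟨m, ⟨eα⟩⟩ := Finite.exists_equiv_fin α
  obtain ⟨s, ⟨eβ⟩⟩ := Finite.exists_equiv_fin β
  let φ' : L.Formula (Fin m ⊕ Fin s) := φ.relabel (Sum.map eα eβ)
  have hM (x : Fin m → M) : ∃ y : Fin s → M, φ'.Realize (Sum.elim x y) := by
    obtain ⟨y, hy⟩ := h (x ∘ eα)
    refine ⟨y ∘ eβ.symm, Formula.realize_relabel.2 ?_⟩
    simpa [Sum.elim_comp_map, Function.comp_assoc] using hy
  obtain ⟨y, hy⟩ := H.forall_exists_realize_fin (hφ.relabel _ : φ'.IsQF) hM (x ∘ eα.symm)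
  refine ⟨y ∘ eβ, ?_⟩
  simpa [Sum.elim_comp_map, Function.comp_assoc] using Formula.realize_relabel.1 hy

theorem isEmpty (H : AETheorySub L M N) [IsEmpty M] : IsEmpty N where
  false b := by
    obtain ⟨_, hy⟩ := H.forall_exists_realize (α := Unit) (β := Empty) BoundedFormula.isQF_bot
      (fun x => isEmptyElim (x ())) fun _ => b
    exact hy

theorem exists_forall_realize_of_finite (H : AETheorySub L M N) [Finite α] [Finite β]
    {φ : L.Formula (α ⊕ β)} (hφ : φ.IsQF)
    (h : ∃ x : α → N, ∀ y : β → N, φ.Realize (Sum.elim x y)) :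
    ∃ x : α → M, ∀ y : β → M, φ.Realize (Sum.elim x y) := by
  contrapose! h
  simpa only [Formula.realize_not] using H.forall_exists_realize hφ.not h

theorem exists_forall_realize [Nonempty M] (H : AETheorySub L M N) [Finite β]
    {φ : L.Formula (α ⊕ β)} (hφ : φ.IsQF)
    (h : ∃ x : α → N, ∀ y : β → N, φ.Realize (Sum.elim x y)) :
    ∃ x : α → M, ∀ y : β → M, φ.Realize (Sum.elim x y) := by
  classical
  obtain ⟨x, hx⟩ := h
  obtain ⟨x', hx'⟩ := H.exists_forall_realize_of_finite (φ := restrictLeft φ)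
    (isQF_restrictFreeVar hφ _) ⟨x ∘ (↑), fun y => (realize_restrictLeft φ x y).2 (hx y)⟩
  obtain ⟨x', rfl⟩ := Subtype.val_injective.surjective_comp_right (γ := M) x'
  exact ⟨x', fun y => (realize_restrictLeft φ x' y).1 (hx' y)⟩

theorem exists_forall_realize_family [Nonempty M] (H : AETheorySub L M N) {ι : Type*} [Finite ι]
    {β : ι → Type*} [∀ i, Finite (β i)] {φ : ∀ i, L.Formula (α ⊕ β i)} (hφ : ∀ i, (φ i).IsQF)
    (h : ∃ x : α → N, ∀ i, ∀ y : β i → N, (φ i).Realize (Sum.elim x y)) :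
    ∃ x : α → M, ∀ i, ∀ y : β i → M, (φ i).Realize (Sum.elim x y) := by
  have hψ : (Formula.iInf fun i => (φ i).relabel (Sum.map id (Sigma.mk i))).IsQF :=
    isQF_iInf fun i => (hφ i).relabel _
  obtain ⟨x, hx⟩ := H.exists_forall_realize hψ
    (h.imp fun x hx y => (realize_iInf_relabel_sigmaMk φ x y).2 fun i => hx i _)
  refine ⟨x, fun i y => ?_⟩
  obtain ⟨z, rfl⟩ := (sigma_mk_injective (i := i)).surjective_comp_right (γ := M) y
  exact (realize_iInf_relabel_sigmaMk φ x z).1 (hx z) i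

theorem preservesUniversal_of_isEmpty (H : AETheorySub L M N) [IsEmpty M] (f : N → M) :
    PreservesUniversal L f := by
  have := H.isEmpty
  intro s φ hφ h
  obtain ⟨x, hx⟩ := H.exists_forall_realize_of_finite hφ ⟨id, h⟩
  rwa [Subsingleton.elim f x]

theorem exists_preservesUniversal_of_nonempty {L : FirstOrder.Language.{u, v}} {M : Type w}
    {N : Type x} [L.Structure M] [L.Structure N] [Nonempty M] (H : AETheorySub L M N) :
    ∃ (M' : Type (max u v w x)) (_ : L.Structure M'),
      (M ≅[L] M') ∧ ∃ f : N → M', PreservesUniversal L f := by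
  let Γ : Set (L.Formula N) := {χ | ∃ (s : ℕ) (φ : L.Formula (N ⊕ Fin s)), φ.IsQF ∧
    φ.iAlls (Fin s) = χ ∧ χ.Realize id}
  have hΓ (S : Finset Γ) : ∃ a : N → M, ∀ χ ∈ S, χ.1.Realize a := by
    choose s φ hφ hχ hid using fun χ : S => χ.1.2
    simp only [← hχ, Formula.realize_iAlls] at hid
    obtain ⟨a, ha⟩ := H.exists_forall_realize_family hφ ⟨id, hid⟩
    refine ⟨a, fun χ hχS => ?_⟩
    rw [← hχ ⟨χ, hχS⟩, Formula.realize_iAlls]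
    exact ha ⟨χ, hχS⟩
  obtain ⟨M', _, hM', f, hf⟩ := exists_elementarilyEquivalent_realize Γ hΓ
  refine ⟨M', _, hM', f, fun s φ hφ h => Formula.realize_iAlls.1 (hf _ ⟨s, φ, hφ, rfl, ?_⟩)⟩
  exact Formula.realize_iAlls.2 h

theorem exists_preservesUniversal {L : FirstOrder.Language.{u, v}} {M : Type w} {N : Type x}
    [L.Structure M] [L.Structure N] (H : AETheorySub L M N) :
    ∃ (M' : Type (max u v w x)) (_ : L.Structure M'),
      (M ≅[L] M') ∧ ∃ f : N → M', PreservesUniversal L f := by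
  -- Quantifier blocks cannot be merged in an empty structure, which Mathlib allows.
  cases isEmpty_or_nonempty M with
  | inl _ =>
    have := H.isEmpty
    let e : M ≃ ULift.{max u v x} M := Equiv.ulift.symm
    let _ := e.inducedStructure (L := L)
    have he : M ≅[L] ULift.{max u v x} M :=
      (e.inducedStructureEquiv (L := L)).toElementaryEmbedding.elementarilyEquivalent
    exact ⟨_, _, he, isEmptyElim, (H.of_elementarilyEquivalent he).preservesUniversal_of_isEmpty _⟩
  | inr _ => exact H.exists_preservesUniversal_of_nonempty

end AETheorySub

/-- `Th_{∀∃}(M) ⊆ Th_{∀∃}(N)` iff there is `M* ≡ M` together with an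
existentially closed embedding of `N` into `M*`. -/
theorem stmt0 {L : FirstOrder.Language.{u, v}} {M : Type w} {N : Type x}
    [L.Structure M] [L.Structure N] :
    AETheorySub L M N ↔
      ∃ (M' : Type (max u v w x)) (_ : L.Structure M'),
        (M ≅[L] M') ∧ ∃ f : N ↪[L] M', IsECEmbedding f := by
  constructor
  · intro H
    obtain ⟨M', _, hM', f, hf⟩ := H.exists_preservesUniversal
    exact ⟨M', _, hM', hf.toEmbedding, hf.isECEmbedding_toEmbedding⟩
  · rintro ⟨M', _, hM', f, hf⟩
    exact hf.aeTheorySub.of_elementarilyEquivalent hM'.symm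
end

section
/- For every prime p, every n ≥ 1 and every r ≥ 0, there exists an existential formula χ(x, y₁,…,y_r, z₁,…,zₙ) in the language of rings (that is, χ is of the form ∃w₁…∃wₛ ψ with ψ quantifier-free) such that for every field K of characteristic p and every p-basis (a₁,…,aₙ) of K, the set {(x, y₁,…,y_r) ∈ K^{1+r} : K ⊨ χ(x, y⃗, a⃗)} is the graph of a surjective function from K onto K^r. -/
open FirstOrder Language

attribute [local instance] FirstOrder.Ring.compatibleRingOfRing

universe u

/-- `a : Fin n → K` is a `p`-basis of the field `K` of characteristic `p`: every element of `K`
is, in a unique way, a linear combination of the monomials `a₁^e₁ ⋯ aₙ^eₙ` (with `0 ≤ eᵢ < p`)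
with coefficients in the subfield `K^p` of `p`-th powers. -/
def IsPBasis (p : ℕ) {n : ℕ} {K : Type*} [Field K] (a : Fin n → K) : Prop :=
  ∀ x : K, ∃! c : (Fin n → Fin p) → K,
    x = ∑ e : Fin n → Fin p, (c e) ^ p * ∏ i : Fin n, (a i) ^ (e i : ℕ)

/-!
A `p`-basis turns `c ↦ ∑ e, c e ^ p * a ^ e` into a bijection `K ^ ι → K`, where `ι` is the set of
exponents, and this bijection is given by a term `t` with parameters `a`. Substituting `t` into
itself gives terms whose induced maps `K ^ κ → K` are again bijective, with `κ` as large as we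
please. Once `κ` has at least `r` elements, split its variables as `(y, w)` with `y` of length `r`:
the formula `∃ w, x = t'(y, w, a)` then says that `y` consists of the first `r` coordinates of the
preimage of `x`, and every `y` arises in this way because `w` may be chosen freely.
-/

section TermMap

variable {L : Language} {ι κ α : Type*} {K : Type*} [L.Structure K]

/-- The operation `(ι → K) → K` induced by a term `t`, whose variables in `ι` are the arguments and
whose variables in `α` are parameters, interpreted by `a`. -/
def termMap (t : L.Term (ι ⊕ α)) (a : α → K) (c : ι → K) : K :=
  t.realize (Sum.elim c a)

/-- The term `t'((t(c (k, ·)))ₖ)`: a disjoint copy of `t` is substituted for each argument of `t'`,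
while the parameters are shared. -/
def substTerm (t' : L.Term (κ ⊕ α)) (t : L.Term (ι ⊕ α)) : L.Term ((κ × ι) ⊕ α) :=
  t'.subst (Sum.elim (fun k => t.relabel (Sum.map (Prod.mk k) id)) fun i => .var (.inr i))

theorem termMap_substTerm (t' : L.Term (κ ⊕ α)) (t : L.Term (ι ⊕ α)) (a : α → K) (c : κ × ι → K) :
    termMap (substTerm t' t) a c = termMap t' a fun k => termMap t a fun i => c (k, i) := by
  simp only [termMap, substTerm, Term.realize_subst]
  congr 1
  ext (k | i)
  · simp only [Sum.elim_inl, Term.realize_relabel, Sum.elim_comp_map, Function.comp_id]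
    rfl
  · rfl

theorem bijective_termMap_substTerm {t' : L.Term (κ ⊕ α)} {t : L.Term (ι ⊕ α)} {a : α → K}
    (ht' : (termMap t' a).Bijective) (ht : (termMap t a).Bijective) :
    (termMap (substTerm t' t) a).Bijective := by
  have h : termMap (substTerm t' t) a =
      termMap t' a ∘ Pi.map (fun _ => termMap t a) ∘ Equiv.curry κ ι K :=
    funext (termMap_substTerm t' t a)
  rw [h]
  exact ht'.comp ((Function.Bijective.piMap fun _ => ht).comp (Equiv.bijective _))

theorem bijective_termMap_relabel {t : L.Term (ι ⊕ α)} {a : α → K} (e : ι ≃ κ)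
    (ht : (termMap t a).Bijective) :
    (termMap (t.relabel (Sum.map e id)) a).Bijective := by
  have h : termMap (t.relabel (Sum.map e id)) a = termMap t a ∘ e.symm.arrowCongr (.refl K) := by
    ext c
    rw [termMap, Term.realize_relabel, Sum.elim_comp_map]
    rfl
  rw [h]
  exact ht.comp (Equiv.bijective _)

end TermMap

theorem exists_gt_forall_bijective_termMap {L : Language} {ι α : Type*} [Finite ι] [Nontrivial ι]
    (t : L.Term (ι ⊕ α)) (r : ℕ) :
    ∃ (m : ℕ) (t' : L.Term (Fin m ⊕ α)), r < m ∧
      ∀ (K : Type u) [L.Structure K] (a : α → K),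
        (termMap t a).Bijective → (termMap t' a).Bijective := by
  induction r with
  | zero => exact ⟨1, .var (.inl 0), one_pos, fun K _ _ _ => (Equiv.funUnique (Fin 1) K).bijective⟩
  | succ r ih =>
    obtain ⟨m, t', hm, ht'⟩ := ih
    have hι : 1 < Nat.card ι := Finite.one_lt_card
    refine ⟨m * Nat.card ι, (substTerm t' t).relabel
      (Sum.map (((Equiv.refl _).prodCongr (Finite.equivFin ι)).trans finProdFinEquiv) id),
      by nlinarith, fun K _ a ht => ?_⟩
    exact bijective_termMap_relabel _ (bijective_termMap_substTerm (ht' K a ht) ht)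

/-- The equation `x = t(y, w, a)` in the free variables `x`, `y`, `a` and the bound variables `w`,
where the arguments of `t` are split into `y` (the first `r` of them) and `w`. -/
def argumentEquation {L : Language} {α : Type*} {r s : ℕ} (t : L.Term (Fin (r + s) ⊕ α)) :
    L.BoundedFormula (Unit ⊕ Fin r ⊕ α) s :=
  (Term.var (.inl (.inl ()))).bdEqual <| t.relabel <|
    Sum.elim (Fin.append (fun j => .inl (.inr (.inl j))) .inr) fun i => .inl (.inr (.inr i))

theorem realize_exs_argumentEquation {L : Language} {α K : Type*} [L.Structure K] {r s : ℕ}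
    (t : L.Term (Fin (r + s) ⊕ α)) (x : K) (y : Fin r → K) (a : α → K) :
    ((argumentEquation t).exs : L.Formula _).Realize
        (Sum.elim (fun _ : Unit => x) (Sum.elim y a)) ↔
      ∃ w : Fin s → K, x = termMap t a (Fin.append y w) := by
  rw [BoundedFormula.realize_exs]
  refine exists_congr fun w => ?_
  rw [argumentEquation, BoundedFormula.realize_bdEqual, Term.realize_relabel, termMap]
  have h : Sum.elim (Sum.elim (fun _ : Unit => x) (Sum.elim y a)) w ∘
      Sum.elim (Fin.append (fun j => .inl (.inr (.inl j))) .inr) (fun i => .inl (.inr (.inr i))) =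
      Sum.elim (Fin.append y w) a := by
    ext (j | i)
    · induction j using Fin.addCases <;> simp
    · rfl
  rw [h]
  rfl

theorem stmt5_general {L : Language} {ι α : Type*} [Finite ι] [Nontrivial ι]
    (t : L.Term (ι ⊕ α)) (r : ℕ) :
    ∃ (s : ℕ) (ψ : L.BoundedFormula (Unit ⊕ Fin r ⊕ α) s), ψ.IsAtomic ∧
      ∀ (K : Type u) [L.Structure K] [Nonempty K] (a : α → K), (termMap t a).Bijective →
        (∀ x : K, ∃! y : Fin r → K,
          (ψ.exs : L.Formula _).Realize (Sum.elim (fun _ : Unit => x) (Sum.elim y a))) ∧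
        (∀ y : Fin r → K, ∃ x : K,
          (ψ.exs : L.Formula _).Realize (Sum.elim (fun _ : Unit => x) (Sum.elim y a))) := by
  obtain ⟨m, t', hm, ht'⟩ := exists_gt_forall_bijective_termMap.{u} t r
  obtain ⟨s, rfl⟩ := Nat.exists_eq_add_of_le hm.le
  refine ⟨s, argumentEquation t', .equal _ _, fun K _ _ a ht => ?_⟩
  simp only [realize_exs_argumentEquation]
  have h_bij := (ht' K a ht).comp (Fin.appendEquiv r s).bijective
  refine ⟨fun x => ?_, fun y => ⟨_, fun _ => Classical.arbitrary K, rfl⟩⟩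
  obtain ⟨⟨y, w⟩, hyw⟩ := h_bij.surjective x
  refine ⟨y, ⟨w, hyw.symm⟩, ?_⟩
  rintro y' ⟨w', hyw'⟩
  have h : (y', w') = (y, w) := h_bij.injective (hyw'.symm.trans hyw.symm)
  exact congrArg Prod.fst h

/-- The term `∑ e, c e ^ p * ∏ i, a i ^ e i` in the arguments `c` and the parameters `a`, whose
bijectivity in `c` says that `a` is a `p`-basis. -/
noncomputable def pBasisTerm (p n : ℕ) : Language.ring.Term ((Fin n → Fin p) ⊕ Fin n) :=
  Ring.termOfFreeCommRing
    (∑ e : Fin n → Fin p, .of (.inl e) ^ p * ∏ i, .of (.inr i) ^ (e i : ℕ))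

theorem termMap_pBasisTerm {p n : ℕ} {K : Type*} [CommRing K] (a : Fin n → K)
    (c : (Fin n → Fin p) → K) :
    termMap (pBasisTerm p n) a c = ∑ e, c e ^ p * ∏ i, a i ^ (e i : ℕ) := by
  simp [termMap, pBasisTerm]

theorem isPBasis_iff_bijective {p n : ℕ} {K : Type*} [Field K] {a : Fin n → K} :
    IsPBasis p a ↔ (termMap (pBasisTerm p n) a).Bijective := by
  simp only [IsPBasis, Function.bijective_iff_existsUnique, termMap_pBasisTerm, eq_comm]

/-- for every prime `p`, `n ≥ 1` and `r ≥ 0` there is an existential ring formula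
`χ(x, y₁, …, y_r, z₁, …, zₙ)` such that for every field `K` of characteristic `p` and every
`p`-basis `a₁, …, aₙ` of `K`, the set defined by `χ(x, y⃗, a⃗)` is the graph of a surjective
function `K → K^r`. -/
theorem stmt5 (p : ℕ) (hp : p.Prime) (n : ℕ) (hn : 1 ≤ n) (r : ℕ) :
    ∃ (s : ℕ) (ψ : Language.ring.BoundedFormula (Unit ⊕ Fin r ⊕ Fin n) s), ψ.IsQF ∧
      ∀ (K : Type u) [Field K] [CharP K p] (a : Fin n → K), IsPBasis p a →
        (∀ x : K, ∃! y : Fin r → K,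
          (ψ.exs : Language.ring.Formula _).Realize
            (Sum.elim (fun _ : Unit => x) (Sum.elim y a))) ∧
        (∀ y : Fin r → K, ∃ x : K,
          (ψ.exs : Language.ring.Formula _).Realize
            (Sum.elim (fun _ : Unit => x) (Sum.elim y a))) := by
  have : Nonempty (Fin n) := ⟨⟨0, hn⟩⟩
  have : Nontrivial (Fin p) := Fin.nontrivial_iff_two_le.2 hp.two_le
  obtain ⟨s, ψ, hψ, h⟩ := stmt5_general.{u} (pBasisTerm p n) r
  exact ⟨s, ψ, hψ.isQF, fun K _ _ a ha => h K a (isPBasis_iff_bijective.1 ha)⟩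
end

section
/- Let k ⊆ k' be a field extension such that k is existentially closed in k', i.e., for every quantifier-free ring formula ψ(y₁,…,yₛ,v₁,…,v_m) and all a₁,…,a_m ∈ k: if k' ⊨ ∃y⃗ ψ(y⃗, a⃗) then k ⊨ ∃y⃗ ψ(y⃗, a⃗). Then Th_{∀₁∃}(k(t)) = Th_{∀₁∃}(k'(t)); that is, for every quantifier-free ring formula ψ, the sentence ∀x ∃y₁…∃yₛ ψ is true in the rational function field k(t) if and only if it is true in k'(t). -/
open FirstOrder Language

attribute [local instance] FirstOrder.Ring.compatibleRingOfRing

/-! If `k` is existentially closed in `k'`, then every finite subset of `k'` lies in a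
`k`-subalgebra `A` with a retraction `A → k`: by the Hilbert basis theorem the relations between
finitely many elements of `k'` form a finitely generated ideal, and its generators have a
common zero in `k`.
Localizing `A[t]` at the polynomials that do not vanish under `A[t] → k[t]` gives subalgebras of
`k'(t)` which retract to `k(t)` and exhaust `k'(t)` locally, so existential formulas with parameters
in `k(t)` descend from `k'(t)` to `k(t)`.

Conversely, the retractions show that `k` is algebraically closed in `k'`. Hence each `x ∈ k'(t)` is
either in `k` or transcendental over `k`, and in both cases it lies in the image of a `k`-embedding
`k(t) → k'(t)`. An existential formula true in `k(t)` of every element is then true of `x`. -/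

open Polynomial

universe u v

theorem isExistential_exsN {L : FirstOrder.Language} {α : Type*} {m : ℕ} :
    ∀ {s : ℕ} {φ : L.BoundedFormula α (m + s)}, φ.IsExistential → φ.exsN.IsExistential
  | 0, _, hφ => hφ
  | _ + 1, φ, hφ => isExistential_exsN (φ := φ.ex) hφ.ex

section Realization

theorem term_realize_comp_ringHom {R S α : Type*} [CommRing R] [CommRing S] (f : R →+* S)
    (v : α → R) (t : Language.ring.Term α) : t.realize (f ∘ v) = f (t.realize v) := by
  induction t with
  | var a => rfl
  | func g ts ih =>
    simp only [Term.realize, ih]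
    cases g
    · exact (map_add f _ _).symm
    · exact (map_mul f _ _).symm
    · exact (map_neg f _).symm
    · exact (map_zero f).symm
    · exact (map_one f).symm

variable {K L α : Type*} [CommRing K] [Nontrivial K] [Field L]

theorem map_eq_map_iff_of_inv_sub_mem {A : Subring L} (r : A →+* K) {a b : A}
    (hinv : ((a : L) - b)⁻¹ ∈ A) : r a = r b ↔ a = b := by
  refine ⟨fun hr => by_contra fun hne => ?_, congrArg r⟩
  have hsub : (a : L) - b ≠ 0 := sub_ne_zero.2 (Subtype.coe_ne_coe.2 hne)
  have hunit : (a - b) * ⟨_, hinv⟩ = 1 := Subtype.ext (mul_inv_cancel₀ hsub)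
  simpa [hr] using congrArg r hunit

theorem exists_finset_realize_iff_of_isQF {n : ℕ} {φ : Language.ring.BoundedFormula α n}
    (hφ : φ.IsQF) (v : α → L) (xs : Fin n → L) :
    ∃ S : Finset L, ∀ (A : Subring L) (r : A →+* K), (S : Set L) ⊆ A →
      ∀ (v' : α → A) (xs' : Fin n → A), A.subtype ∘ v' = v → A.subtype ∘ xs' = xs →
        (φ.Realize (r ∘ v') (r ∘ xs') ↔ φ.Realize v xs) := by
  classical
  induction hφ with
  | falsum => exact ⟨∅, fun _ _ _ _ _ _ _ => Iff.rfl⟩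
  | of_isAtomic hφ =>
    cases hφ with
    | rel R => cases R
    | equal t₁ t₂ =>
      -- Inverting `t₁ - t₂`, if it is nonzero, keeps `r` from identifying `t₁` with `t₂`.
      refine ⟨{(t₁.realize (Sum.elim v xs) - t₂.realize (Sum.elim v xs))⁻¹}, ?_⟩
      rintro A r hS v' xs' rfl rfl
      simp only [Finset.coe_singleton, Set.singleton_subset_iff, SetLike.mem_coe,
        ← Sum.comp_elim, term_realize_comp_ringHom] at hS
      simp only [BoundedFormula.realize_bdEqual, ← Sum.comp_elim, term_realize_comp_ringHom,
        map_eq_map_iff_of_inv_sub_mem r hS, A.subtype_injective.eq_iff]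
  | imp _ _ ih₁ ih₂ =>
    obtain ⟨S₁, h₁⟩ := ih₁
    obtain ⟨S₂, h₂⟩ := ih₂
    refine ⟨S₁ ∪ S₂, fun A r hS v' xs' hv hxs => ?_⟩
    rw [Finset.coe_union, Set.union_subset_iff] at hS
    rw [BoundedFormula.realize_imp, BoundedFormula.realize_imp, h₁ A r hS.1 v' xs' hv hxs,
      h₂ A r hS.2 v' xs' hv hxs]

theorem exists_finset_realize_of_isExistential {n : ℕ} {φ : Language.ring.BoundedFormula α n}
    (hφ : φ.IsExistential) {v : α → L} {xs : Fin n → L} (h : φ.Realize v xs) :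
    ∃ S : Finset L, ∀ (A : Subring L) (r : A →+* K), (S : Set L) ⊆ A →
      ∀ (v' : α → A) (xs' : Fin n → A), A.subtype ∘ v' = v → A.subtype ∘ xs' = xs →
        φ.Realize (r ∘ v') (r ∘ xs') := by
  classical
  induction hφ with
  | of_isQF hφ =>
    obtain ⟨S, hS⟩ := exists_finset_realize_iff_of_isQF (K := K) hφ v xs
    exact ⟨S, fun A r hA v' xs' hv hxs => (hS A r hA v' xs' hv hxs).2 h⟩
  | ex _ ih =>
    obtain ⟨b, hb⟩ := BoundedFormula.realize_ex.1 h
    obtain ⟨S, hS⟩ := ih hb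
    refine ⟨insert b S, fun A r hA v' xs' hv hxs => BoundedFormula.realize_ex.2 ?_⟩
    rw [Finset.coe_insert, Set.insert_subset_iff] at hA
    refine ⟨r ⟨b, hA.1⟩, ?_⟩
    rw [← Fin.comp_snoc]
    refine hS A r hA.2 v' _ hv ?_
    rw [Fin.comp_snoc, hxs, Subring.subtype_apply]

theorem realize_comp_ringHom_of_isExistential {n : ℕ} {φ : Language.ring.BoundedFormula α n}
    (hφ : φ.IsExistential) (f : L →+* K) {v : α → L} {xs : Fin n → L} (h : φ.Realize v xs) :
    φ.Realize (f ∘ v) (f ∘ xs) := by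
  obtain ⟨S, hS⟩ := exists_finset_realize_of_isExistential (K := K) hφ h
  exact hS ⊤ (f.comp (⊤ : Subring L).subtype) (Set.subset_univ _) (fun a => ⟨v a, trivial⟩)
    (fun i => ⟨xs i, trivial⟩) rfl rfl

end Realization

/-- Every finite subset of `S` lies in an `R`-subalgebra of `S` that retracts onto `R`. For fields
this is an algebraic form of existential closedness of `R` in `S`. -/
def HasLocalRetractions (R S : Type*) [CommRing R] [CommRing S] [Algebra R S] : Prop :=
  ∀ T : Finset S, ∃ A : Subalgebra R S, (T : Set S) ⊆ A ∧ Nonempty (A →ₐ[R] R)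

theorem HasLocalRetractions.realize_of_isExistential {K L α : Type*} [CommRing K] [Nontrivial K]
    [Field L] [Algebra K L] (hKL : HasLocalRetractions K L) {n : ℕ}
    {φ : Language.ring.BoundedFormula α n} (hφ : φ.IsExistential) {v : α → K} {xs : Fin n → K}
    (h : φ.Realize (algebraMap K L ∘ v) (algebraMap K L ∘ xs)) : φ.Realize v xs := by
  obtain ⟨S, hS⟩ := exists_finset_realize_of_isExistential (K := K) hφ h
  obtain ⟨A, hSA, ⟨r⟩⟩ := hKL S
  convert hS A.toSubring (r : A →+* K) hSA (algebraMap K A ∘ v) (algebraMap K A ∘ xs) rfl rfl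
  · exact funext fun a => (r.commutes (v a)).symm
  · exact funext fun j => (r.commutes (xs j)).symm

theorem HasLocalRetractions.isIntegrallyClosedIn {k A : Type*} [Field k] [CommRing A] [IsDomain A]
    [Algebra k A] (h : HasLocalRetractions k A) : IsIntegrallyClosedIn k A := by
  refine ⟨(algebraMap k A).injective, fun {c} => ⟨fun hc => ?_, ?_⟩⟩
  · obtain ⟨B, hcB, ⟨r⟩⟩ := h {c}
    let b : B := ⟨c, hcB (by simp)⟩
    have hb : aeval b (minpoly k c) = 0 := Subtype.ext <| by
      rw [Polynomial.aeval_subalgebra_coe, minpoly.aeval, ZeroMemClass.coe_zero]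
    have hroot : (minpoly k c).IsRoot (r b) := by
      rw [IsRoot, ← coe_aeval_eq_eval, aeval_algHom_apply, hb, map_zero]
    exact minpoly.mem_range_of_degree_eq_one k c
      (degree_eq_one_of_irreducible_of_root (minpoly.irreducible hc) hroot)
  · rintro ⟨a, rfl⟩
    exact isIntegral_algebraMap

section ZeroLocus

open FirstOrder.Ring in
theorem lift_genericPolyMap_support {ι κ R S : Type*} [CommRing R] [CommRing S] [Algebra R S]
    (p : ι → MvPolynomial κ R) (z : κ → S) (i : ι) :
    FreeCommRing.lift (Sum.elim (fun c => algebraMap R S ((p c.1).coeff c.2)) z)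
      (genericPolyMap (fun i => (p i).support) i) = MvPolynomial.aeval z (p i) := by
  simp only [genericPolyMap, map_sum, map_mul, FreeCommRing.lift_of, Sum.elim_inl, Sum.elim_inr,
    Finsupp.prod, map_prod, map_pow, MvPolynomial.aeval_def, MvPolynomial.eval₂_eq]
  exact Finset.sum_attach _
    fun m => algebraMap R S ((p i).coeff m) * ∏ j ∈ m.support, z j ^ m j

theorem isQF_iInf_s10 {L : FirstOrder.Language} {α β : Type*} [Finite β] {n : ℕ}
    {φ : β → L.BoundedFormula α n} (hφ : ∀ b, (φ b).IsQF) : (BoundedFormula.iInf φ).IsQF := by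
  simp only [BoundedFormula.iInf]
  induction (@Finset.univ β (Fintype.ofFinite β)).toList with
  | nil => exact BoundedFormula.IsQF.top
  | cons b l ih => exact (hφ b).inf ih

variable {R : Type u} [CommRing R] {n : ℕ} (G : Finset (MvPolynomial (Fin n) R))

/-- The coefficients of the polynomials in `G`, enumerated as the parameters of
`zeroLocusFormula G`. -/
noncomputable def coeffTuple : Fin (Fintype.card (Σ g : G, g.1.support)) → R :=
  (fun c : Σ g : G, g.1.support => c.1.1.coeff c.2) ∘ (Fintype.equivFin _).symm

/-- The quantifier-free formula saying that its `n` bound variables are a common zero of the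
polynomials in `G`. The free variables stand for the coefficients of these polynomials. -/
noncomputable def zeroLocusFormula :
    Language.ring.BoundedFormula (Fin (Fintype.card (Σ g : G, g.1.support))) n :=
  BoundedFormula.iInf fun g : G => Term.bdEqual
    ((Ring.termOfFreeCommRing (Ring.genericPolyMap (fun g : G => g.1.support) g)).relabel
      (Sum.map (Fintype.equivFin _) id)) 0

theorem isQF_zeroLocusFormula : (zeroLocusFormula G).IsQF :=
  isQF_iInf_s10 fun _ => (BoundedFormula.IsAtomic.equal _ _).isQF

theorem realize_zeroLocusFormula {S : Type v} [CommRing S] [Algebra R S] (z : Fin n → S) :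
    (zeroLocusFormula G).Realize (algebraMap R S ∘ coeffTuple G) z ↔
      ∀ g ∈ G, MvPolynomial.aeval z g = 0 := by
  have hcoeff : Sum.elim (algebraMap R S ∘ coeffTuple G) z ∘ Sum.map (Fintype.equivFin _) id =
      Sum.elim (fun c : Σ g : G, g.1.support => algebraMap R S (c.1.1.coeff c.2)) z := by
    rw [coeffTuple, Sum.elim_comp_map, Function.comp_assoc, Function.comp_assoc,
      Equiv.symm_comp_self]
    rfl
  simp only [zeroLocusFormula, BoundedFormula.realize_iInf, BoundedFormula.realize_bdEqual,
    Term.realize_relabel, hcoeff, Ring.realize_termOfFreeCommRing, Ring.realize_zero,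
    lift_genericPolyMap_support (fun g : G => g.1), Subtype.forall]

end ZeroLocus

/-- `R` is existentially closed in the `R`-algebra `S`: every existential formula of the language
of rings with parameters in `R` that holds in `S` holds in `R`. -/
def IsExistentiallyClosed (R : Type u) (S : Type v) [CommRing R] [CommRing S] [Algebra R S] :
    Prop :=
  ∀ (m s : ℕ) (ψ : Language.ring.BoundedFormula (Fin m) s), ψ.IsQF → ∀ a : Fin m → R,
    (ψ.exs : Language.ring.Formula _).Realize (fun i => algebraMap R S (a i)) →
    (ψ.exs : Language.ring.Formula _).Realize a

namespace IsExistentiallyClosed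

variable {R : Type u} {S : Type v} [CommRing R] [CommRing S] [Algebra R S]

theorem exists_forall_aeval_eq_zero (h : IsExistentiallyClosed R S) {n : ℕ}
    (G : Finset (MvPolynomial (Fin n) R)) {y : Fin n → S}
    (hy : ∀ g ∈ G, MvPolynomial.aeval y g = 0) :
    ∃ z : Fin n → R, ∀ g ∈ G, MvPolynomial.aeval z g = 0 := by
  have hS : (zeroLocusFormula G).exs.Realize (algebraMap R S ∘ coeffTuple G) :=
    BoundedFormula.realize_exs.2 ⟨y, (realize_zeroLocusFormula G y).2 hy⟩
  obtain ⟨z, hz⟩ := BoundedFormula.realize_exs.1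
    (h _ _ _ (isQF_zeroLocusFormula G) (coeffTuple G) hS)
  exact ⟨z, (realize_zeroLocusFormula G z).1 hz⟩

theorem exists_ker_aeval_le [IsNoetherianRing R] (h : IsExistentiallyClosed R S) {n : ℕ}
    (y : Fin n → S) :
    ∃ z : Fin n → R, RingHom.ker (MvPolynomial.aeval (R := R) y) ≤
      RingHom.ker (MvPolynomial.aeval (R := R) z) := by
  obtain ⟨G, hG⟩ := IsNoetherian.noetherian (RingHom.ker (MvPolynomial.aeval (R := R) y))
  obtain ⟨z, hz⟩ := h.exists_forall_aeval_eq_zero G (y := y) fun g hg =>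
    (hG ▸ Ideal.subset_span hg : g ∈ RingHom.ker (MvPolynomial.aeval (R := R) y))
  exact ⟨z, hG ▸ Ideal.span_le.2 hz⟩

theorem hasLocalRetractions [IsNoetherianRing R] (h : IsExistentiallyClosed R S) :
    HasLocalRetractions R S := by
  intro T
  let y : Fin T.card → S := fun i => T.equivFin.symm i
  let f : MvPolynomial (Fin T.card) R →ₐ[R] S := MvPolynomial.aeval y
  obtain ⟨z, hz⟩ := h.exists_ker_aeval_le y
  refine ⟨f.range, fun t ht => ⟨MvPolynomial.X (T.equivFin ⟨t, ht⟩), by simp [f, y]⟩, ⟨?_⟩⟩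
  exact (Ideal.Quotient.liftₐ (RingHom.ker f) (MvPolynomial.aeval z) fun g hg => hz hg).comp
    (Ideal.quotientKerEquivRange f).symm

end IsExistentiallyClosed

theorem exists_subring_ringHom_div {R K L : Type*} [CommRing R] [Field K] [Field L] {i : R →+* L}
    (hi : Function.Injective i) (σ : R →+* K) :
    ∃ (B : Subring L) (τ : B →+* K), ∀ a d, σ d ≠ 0 →
      ∃ h : i a / i d ∈ B, τ ⟨i a / i d, h⟩ = σ a / σ d := by
  let M : Submonoid R := (nonZeroDivisors K).comap σ
  have hσ (d : M) : IsUnit (σ d) := (nonZeroDivisors.ne_zero d.2).isUnit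
  have hiu (d : M) : IsUnit (i d) :=
    ((map_ne_zero_iff i hi).2 (ne_zero_of_map (hσ d).ne_zero)).isUnit
  let ι : Localization M →+* L := IsLocalization.lift hiu
  have hι : Function.Injective ι := (IsLocalization.lift_injective_iff hiu).2 fun x y =>
    ⟨fun hxy => by simpa [ι] using congrArg ι hxy, fun hxy => by rw [hi hxy]⟩
  let e : Localization M ≃+* ι.range :=
    .ofBijective ι.rangeRestrict
      ⟨fun _ _ hxy => hι (congrArg Subtype.val hxy), ι.rangeRestrict_surjective⟩
  refine ⟨ι.range, (IsLocalization.lift hσ).comp (e.symm : ι.range →+* Localization M),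
    fun a d hd => ?_⟩
  let d' : M := ⟨d, mem_nonZeroDivisors_of_ne_zero hd⟩
  let x : Localization M := IsLocalization.mk' (Localization M) a d'
  have hιx : ι x = i a / i d := by
    rw [eq_div_iff (hiu d').ne_zero, mul_comm]
    exact ((IsLocalization.lift_mk'_spec hiu a (ι x) d').1 rfl).symm
  have hex : e x = ⟨i a / i d, x, hιx⟩ := Subtype.ext hιx
  refine ⟨⟨x, hιx⟩, ?_⟩
  rw [← hex, RingHom.comp_apply, RingHom.coe_coe, e.symm_apply_apply, IsLocalization.lift_mk'_spec,
    mul_div_cancel₀ _ hd]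

section RatFunc

variable (k : Type u) (k' : Type v) [Field k] [Field k'] [Algebra k k']

/-- The inclusion `k(t) → k'(t)` induced by a field extension `k → k'`. -/
noncomputable def ratFuncMap : RatFunc k →ₐ[k] RatFunc k' :=
  RatFunc.mapAlgHom (mapAlgHom (Algebra.ofId k k'))
    (nonZeroDivisors_le_comap_nonZeroDivisors_of_injective _
      (map_injective _ (algebraMap k k').injective))

/-- `k'(t)` as an extension of `k(t)`. -/
noncomputable abbrev ratFuncAlgebra : Algebra (RatFunc k) (RatFunc k') :=
  (ratFuncMap k k').toRingHom.toAlgebra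

attribute [local instance] ratFuncAlgebra

variable {k k'}

theorem ratFuncMap_div (p q : k[X]) :
    ratFuncMap k k' (algebraMap k[X] _ p / algebraMap k[X] _ q) =
      algebraMap k'[X] _ (p.map (algebraMap k k')) /
        algebraMap k'[X] _ (q.map (algebraMap k k')) :=
  RatFunc.map_apply_div (mapAlgHom (Algebra.ofId k k'))
    (nonZeroDivisors_le_comap_nonZeroDivisors_of_injective _
      (map_injective _ (algebraMap k k').injective)) p q

theorem ratFuncMap_C (a : k) : ratFuncMap k k' (RatFunc.C a) = RatFunc.C (algebraMap k k' a) :=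
  (ratFuncMap k k').commutes a

theorem exists_algHom_ratFunc_apply_eq [IsIntegrallyClosedIn k k'] (x : RatFunc k') :
    ∃ (f : RatFunc k →ₐ[k] RatFunc k') (y : RatFunc k), f y = x := by
  by_cases hx : Transcendental k x
  · exact ⟨(IntermediateField.val _).comp (RatFunc.algEquivOfTranscendental x hx).toAlgHom,
      RatFunc.X, by simp⟩
  · obtain ⟨c, rfl⟩ : ∃ c, x = RatFunc.C c := by
      by_contra hC
      exact hx fun hx => x.transcendental_of_ne_C hC (hx.tower_top k')
    have hc : IsIntegral k c := by
      rw [Transcendental, not_not, ← RatFunc.algebraMap_eq_C,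
        isAlgebraic_algebraMap_iff (algebraMap k' (RatFunc k')).injective] at hx
      exact hx.isIntegral
    obtain ⟨a, rfl⟩ := IsIntegrallyClosedIn.algebraMap_eq_of_integral hc
    exact ⟨ratFuncMap k k', RatFunc.C a, ratFuncMap_C a⟩

theorem exists_subalgebra_ratFunc_algHom (A : Subalgebra k k') (σ : A →ₐ[k] k) :
    ∃ B : Subalgebra (RatFunc k) (RatFunc k'), Nonempty (B →ₐ[RatFunc k] RatFunc k) ∧
      ∀ p q : A[X], q.Monic → algebraMap k'[X] (RatFunc k') (p.map (algebraMap A k')) /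
        algebraMap k'[X] (RatFunc k') (q.map (algebraMap A k')) ∈ B := by
  let i : A[X] →+* RatFunc k' := (algebraMap k'[X] _).comp (mapRingHom (algebraMap A k'))
  let ρ : A[X] →+* RatFunc k := (algebraMap k[X] _).comp (mapRingHom (σ : A →+* k))
  have hi : Function.Injective i :=
    (RatFunc.algebraMap_injective k').comp (map_injective _ Subtype.val_injective)
  obtain ⟨B, τ, hτ⟩ := exists_subring_ringHom_div hi ρ
  have hik (p : k[X]) : i (p.map (algebraMap k A)) =
      algebraMap k'[X] _ (p.map (algebraMap k k')) := by
    simp only [i, RingHom.comp_apply, coe_mapRingHom, Polynomial.map_map,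
      ← IsScalarTower.algebraMap_eq]
  have hρk (p : k[X]) : ρ (p.map (algebraMap k A)) = algebraMap k[X] _ p := by
    simp only [ρ, RingHom.comp_apply, coe_mapRingHom, Polynomial.map_map, σ.comp_algebraMap,
      Algebra.algebraMap_self, Polynomial.map_id]
  have hk (x : RatFunc k) : ∃ hx : algebraMap (RatFunc k) (RatFunc k') x ∈ B, τ ⟨_, hx⟩ = x := by
    have hdenom : ρ (x.denom.map (algebraMap k A)) ≠ 0 := by
      rw [hρk]
      exact RatFunc.algebraMap_ne_zero x.denom_ne_zero
    have hx := hτ (x.num.map (algebraMap k A)) _ hdenom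
    simp only [hik, hρk, ← ratFuncMap_div, RatFunc.num_div_denom] at hx
    exact hx
  exact ⟨{ B with algebraMap_mem' := fun x => (hk x).1 },
    ⟨{ τ with commutes' := fun x => (hk x).2 }⟩,
    fun p q hq => (hτ p q (RatFunc.algebraMap_ne_zero (hq.map (σ : A →+* k)).ne_zero)).1⟩

theorem HasLocalRetractions.ratFunc (h : HasLocalRetractions k k') :
    HasLocalRetractions (RatFunc k) (RatFunc k') := by
  classical
  intro T
  obtain ⟨A, hA, ⟨σ⟩⟩ := h (T.biUnion fun x => x.num.coeffs ∪ x.denom.coeffs)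
  obtain ⟨B, hB, hdiv⟩ := exists_subalgebra_ratFunc_algHom A σ
  refine ⟨B, fun x hx => ?_, hB⟩
  have hnum : (x.num.coeffs : Set k') ⊆ A.toSubring := fun c hc =>
    hA (Finset.mem_biUnion.2 ⟨x, hx, Finset.mem_union_left _ hc⟩)
  have hdenom : (x.denom.coeffs : Set k') ⊆ A.toSubring := fun c hc =>
    hA (Finset.mem_biUnion.2 ⟨x, hx, Finset.mem_union_right _ hc⟩)
  have hmem := hdiv (x.num.toSubring A.toSubring hnum) (x.denom.toSubring A.toSubring hdenom)
    ((monic_toSubring _ _ hdenom).2 x.monic_denom)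
  have hnum_map : (x.num.toSubring A.toSubring hnum).map (algebraMap A k') = x.num :=
    map_toSubring _ _ hnum
  have hdenom_map : (x.denom.toSubring A.toSubring hdenom).map (algebraMap A k') = x.denom :=
    map_toSubring _ _ hdenom
  rw [hnum_map, hdenom_map, x.num_div_denom] at hmem
  exact hmem

theorem stmt10_general {α : Type*} (hec : IsExistentiallyClosed k k')
    {φ : Language.ring.BoundedFormula α 1} (hφ : φ.IsExistential) (a : α → k) :
    (φ.alls : Language.ring.Formula α).Realize (algebraMap k (RatFunc k) ∘ a) ↔
      (φ.alls : Language.ring.Formula α).Realize (algebraMap k (RatFunc k') ∘ a) := by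
  have hret : HasLocalRetractions k k' := hec.hasLocalRetractions
  have : IsIntegrallyClosedIn k k' := hret.isIntegrallyClosedIn
  have hconst (f : RatFunc k →ₐ[k] RatFunc k') :
      f ∘ algebraMap k (RatFunc k) ∘ a = algebraMap k (RatFunc k') ∘ a :=
    funext fun c => f.commutes (a c)
  rw [BoundedFormula.realize_alls, BoundedFormula.realize_alls]
  refine ⟨fun h xs => ?_, fun h xs => ?_⟩
  · obtain ⟨f, y, hy⟩ := exists_algHom_ratFunc_apply_eq (k := k) (xs 0)
    have hxs : f ∘ (fun _ => y) = xs := funext fun j => by rw [Subsingleton.elim j 0]; exact hy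
    rw [← hconst f, ← hxs]
    exact realize_comp_ringHom_of_isExistential hφ (f : RatFunc k →+* RatFunc k') (h fun _ => y)
  · refine hret.ratFunc.realize_of_isExistential hφ ?_
    exact hconst (ratFuncMap k k') ▸ h (ratFuncMap k k' ∘ xs)

end RatFunc

/-- if `k ⊆ k'` is a field extension with `k` existentially closed in `k'`, then
`Th_{∀₁∃}(k(t)) = Th_{∀₁∃}(k'(t))`: for every quantifier-free ring formula `ψ`, the sentence
`∀ x ∃ y₁ … yₛ ψ` holds in the rational function field `k(t)` iff it holds in `k'(t)`. -/
theorem stmt10 (k k' : Type) [Field k] [Field k'] [Algebra k k']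
    (hec : ∀ (m s : ℕ) (ψ : Language.ring.BoundedFormula (Fin m) s), ψ.IsQF →
      ∀ a : Fin m → k,
        (ψ.exs : Language.ring.Formula _).Realize (fun i => algebraMap k k' (a i)) →
        (ψ.exs : Language.ring.Formula _).Realize a) :
    ∀ (s : ℕ) (ψ : Language.ring.BoundedFormula Empty (1 + s)), ψ.IsQF →
      (RatFunc k ⊨ (ψ.exsN.alls : Language.ring.Sentence) ↔
        RatFunc k' ⊨ (ψ.exsN.alls : Language.ring.Sentence)) := by
  intro s ψ hψ
  simpa only [Sentence.Realize, Unique.eq_default] using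
    stmt10_general hec (isExistential_exsN hψ.isExistential) default
end
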